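/- Let S be a polynomial ring over a field k with a variable x, and let I_1, J_1, K be monomial ideals of S none of whose minimal monomial generators is divisible by x. Set I = I_1 + (x^m) and J = J_1 + (x^n) with m ≥ n ≥ 1. Then the colon ideal ((IJK) : x^m) equals I_1K + J_1K + x^n K. -/

import Mathlib

/-!
Write `x = X i`. Since `IJK = I₁J₁K + x^n I₁K + x^m J₁K + x^(m+n) K`, it lies in
`I₁K + x^m (J₁K + x^n K)`. If `x^m f = a + x^m b` with `a ∈ I₁K` and `b ∈ J₁K + x^n K`, then
`x^m (f - b) ∈ I₁K`. The ideal `I₁K` is again generated by monomials free of `x`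
(`IsMonomialIdealAvoiding.mul`), so `x^m` is a nonzerodivisor modulo it
(`IsMonomialIdealAvoiding.mem_of_mul_X_pow_mem`); hence `f - b ∈ I₁K` and `f` is in the
right-hand side. The other inclusion is immediate, with `n ≤ m` giving `x^m I₁K ⊆ x^n I₁K`.
-/

open MvPolynomial

/-- A monomial ideal of `k[x_1, …, x_r]` none of whose (minimal) monomial generators is
divisible by the variable `x i`, i.e. an ideal generated by monomials in which the variable
`x i` does not occur. -/
def IsMonomialIdealAvoiding {k : Type*} [Field k] {r : ℕ} (i : Fin r)
    (I : Ideal (MvPolynomial (Fin r) k)) : Prop :=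
  ∃ G : Set (Fin r →₀ ℕ), (∀ d ∈ G, d i = 0) ∧
    I = Ideal.span ((fun d => (monomial d (1 : k) : MvPolynomial (Fin r) k)) '' G)

theorem IsMonomialIdealAvoiding.mul {k : Type*} [Field k] {r : ℕ} {i : Fin r}
    {A B : Ideal (MvPolynomial (Fin r) k)} (hA : IsMonomialIdealAvoiding i A)
    (hB : IsMonomialIdealAvoiding i B) : IsMonomialIdealAvoiding i (A * B) := by
  obtain ⟨G, hG, rfl⟩ := hA
  obtain ⟨H, hH, rfl⟩ := hB
  refine ⟨Set.image2 (· + ·) G H, ?_, ?_⟩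
  · rintro _ ⟨a, ha, b, hb, rfl⟩
    simp [hG a ha, hH b hb]
  · rw [Ideal.span_mul_span']
    congr 1
    ext p
    simp only [Set.mem_mul, Set.mem_image, Set.mem_image2]
    constructor
    · rintro ⟨_, ⟨a, ha, rfl⟩, _, ⟨b, hb, rfl⟩, rfl⟩
      exact ⟨a + b, ⟨a, ha, b, hb, rfl⟩, by simp [monomial_mul]⟩
    · rintro ⟨_, ⟨a, ha, b, hb, rfl⟩, rfl⟩
      exact ⟨_, ⟨a, ha, rfl⟩, _, ⟨b, hb, rfl⟩, by simp [monomial_mul]⟩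

/-- Powers of `X i` are nonzerodivisors modulo a monomial ideal whose generators avoid `X i`:
a generator dividing `X i ^ m` times a monomial already divides that monomial. -/
theorem IsMonomialIdealAvoiding.mem_of_mul_X_pow_mem {k : Type*} [Field k] {r : ℕ} {i : Fin r}
    {L : Ideal (MvPolynomial (Fin r) k)} (hL : IsMonomialIdealAvoiding i L) {m : ℕ}
    {g : MvPolynomial (Fin r) k} (h : g * X i ^ m ∈ L) : g ∈ L := by
  obtain ⟨G, hG, rfl⟩ := hL
  rw [mem_ideal_span_monomial_image] at h ⊢
  intro d hd
  obtain ⟨e, he, hle⟩ := h (d + Finsupp.single i m) (by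
    rw [mem_support_iff] at hd ⊢
    rwa [X_pow_eq_monomial, coeff_mul_monomial, mul_one])
  refine ⟨e, he, fun j => ?_⟩
  by_cases hj : j = i
  · subst hj
    simp [hG e he]
  · simpa [Finsupp.single_apply, Ne.symm hj] using hle j

/-- Let `S` be a polynomial ring over a field `k` with a variable `x`, and
`I₁`, `J₁`, `K` monomial ideals of `S` none of whose minimal monomial generators is divisible
by `x`.  Set `I = I₁ + (x^m)` and `J = J₁ + (x^n)` with `m ≥ n ≥ 1`.  Then
`((IJK) : x^m) = I₁K + J₁K + x^n K`. -/
theorem colon_triple_product_eq_two {k : Type*} [Field k] {r : ℕ} (i : Fin r)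
    (I₁ J₁ K : Ideal (MvPolynomial (Fin r) k))
    (hI₁ : IsMonomialIdealAvoiding i I₁) (hJ₁ : IsMonomialIdealAvoiding i J₁)
    (hK : IsMonomialIdealAvoiding i K) (m n : ℕ) (hmn : n ≤ m) (hn : 1 ≤ n)
    (I J : Ideal (MvPolynomial (Fin r) k))
    (hI : I = I₁ + Ideal.span {(X i : MvPolynomial (Fin r) k) ^ m})
    (hJ : J = J₁ + Ideal.span {(X i : MvPolynomial (Fin r) k) ^ n}) :
    (I * J * K).colon (Ideal.span {(X i : MvPolynomial (Fin r) k) ^ m}) =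
      I₁ * K + J₁ * K + Ideal.span {(X i : MvPolynomial (Fin r) k) ^ n} * K := by
  subst hI hJ
  set x : MvPolynomial (Fin r) k := X i
  have hpow : Ideal.span {x ^ m} ≤ Ideal.span {x ^ n} :=
    Ideal.span_singleton_le_span_singleton.2 (pow_dvd_pow x hmn)
  have hcolon : ∀ f, f ∈ ((I₁ + Ideal.span {x ^ m}) * (J₁ + Ideal.span {x ^ n}) * K).colon
      (Ideal.span {x ^ m}) ↔
      f * x ^ m ∈ (I₁ + Ideal.span {x ^ m}) * (J₁ + Ideal.span {x ^ n}) * K := by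
    intro f
    rw [Submodule.mem_colon]
    constructor
    · intro h
      exact h _ (Ideal.mem_span_singleton_self _)
    · intro h p hp
      obtain ⟨c, rfl⟩ := Ideal.mem_span_singleton'.1 hp
      have := Ideal.mul_mem_left _ c h
      rwa [smul_eq_mul, mul_left_comm]
  apply le_antisymm
  · intro f hf
    rw [hcolon] at hf
    have hle : (I₁ + Ideal.span {x ^ m}) * (J₁ + Ideal.span {x ^ n}) * K ≤
        I₁ * K + Ideal.span {x ^ m} * (J₁ * K + Ideal.span {x ^ n} * K) := by
      have e : (I₁ + Ideal.span {x ^ m}) * (J₁ + Ideal.span {x ^ n}) * K =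
          I₁ * K * (J₁ + Ideal.span {x ^ n}) +
            Ideal.span {x ^ m} * (J₁ * K + Ideal.span {x ^ n} * K) := by ring
      rw [e]
      exact sup_le_sup_right Ideal.mul_le_left _
    obtain ⟨a, ha, c, hc, hac⟩ := Submodule.mem_sup.1 (hle hf)
    obtain ⟨b, hb, rfl⟩ := Ideal.mem_span_singleton_mul.1 hc
    have hfb : f - b ∈ I₁ * K := by
      refine (hI₁.mul hK).mem_of_mul_X_pow_mem (m := m) ?_
      have e : (f - b) * X i ^ m = a := by rw [sub_mul, ← hac]; ring
      rwa [e]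
    rw [add_assoc]
    exact Submodule.mem_sup.2 ⟨f - b, hfb, b, hb, sub_add_cancel f b⟩
  · have hmul : (I₁ * K + J₁ * K + Ideal.span {x ^ n} * K) * Ideal.span {x ^ m} ≤
        (I₁ + Ideal.span {x ^ m}) * (J₁ + Ideal.span {x ^ n}) * K := by
      have e : (I₁ * K + J₁ * K + Ideal.span {x ^ n} * K) * Ideal.span {x ^ m} =
          I₁ * Ideal.span {x ^ m} * K +
            Ideal.span {x ^ m} * (J₁ + Ideal.span {x ^ n}) * K := by ring
      rw [e]
      refine sup_le ?_ ?_
      · exact Ideal.mul_mono_left (Ideal.mul_mono le_sup_left (hpow.trans le_sup_right))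
      · exact Ideal.mul_mono_left (Ideal.mul_mono_left le_sup_right)
    intro f hf
    rw [hcolon]
    exact hmul (Ideal.mul_mem_mul hf (Ideal.mem_span_singleton_self _))
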